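/- arXiv:2411.02978 — 2 statements merged into one kernel-verified Lean document; each statement's English description precedes it below -/
import Mathlib

section
/- For every nonnegative integer n, b'₅(2n+1) is odd if and only if there exists an integer k such that n = 15k² − 5k; otherwise b'₅(2n+1) is even. -/
/-- `b5' n` is the number of partitions of `n` into distinct parts,
none of which is divisible by `5` (with `b5' 0 = 1`). -/
def b5' (n : ℕ) : ℕ :=
  ((Nat.Partition.distincts n).filter (fun p => ∀ i ∈ p.parts, ¬ (5 ∣ i))).card

/-! All power series are taken modulo `2`. Let `f = ∏ (1 - q ^ i) = ∑ q ^ pentagonal j` and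
`ψ = ∑ q ^ triangular k`, and let `B` be the generating function of `b5'`, so that
`B * f(q⁵) = f`.

For `e = 1` or `e = 5`, completing the squares turns the exponents of `f * ψ(qᵉ)` into values of
`x² + 3 e y²` with `x = 6 j - 1` and `y = 2 k + 1`. The substitution `x = e s + 3 t`, `y = s - t`
rewrites this form as `(e + 3) (e s² + 3 t²)`, and the terms with `t ≠ 0` cancel in pairs `± t`.
For `e = 1` what is left says `f * ψ = f⁴`, that is `ψ = f³`, Jacobi's identity modulo `2`. For
`e = 5` it says that the coefficients of odd index in `f * ψ(q⁵)` form the series `f(q²⁰)`.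

Consequently `B * f(q⁵)⁴ = f * f(q⁵)³ = f * ψ(q⁵)`. Since `f(q⁵)⁴` is the series `f(q⁵)²`
evaluated at `q²`, comparing coefficients of odd index gives `D * f(q⁵)² = f(q²⁰) = f(q⁵)⁴`, where
`D = ∑ b5'(2 n + 1) q ^ n`. Hence `D = f(q⁵)² = f(q¹⁰) = ∑ q ^ (10 * pentagonal k)`. -/

open Finset PowerSeries PowerSeries.WithPiTopology

section Dissection

variable {R : Type*} [CommRing R]

/-- The `r`-th component of the `p`-dissection of `f`: the coefficients of `f` in the residue class
`r` modulo `p`, as a series in `X` rather than in `X ^ p`. -/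
noncomputable def dissection (p r : ℕ) (f : R⟦X⟧) : R⟦X⟧ :=
  .mk fun n ↦ coeff (p * n + r) f

theorem dissection_mul_expand {p r : ℕ} (hp : p ≠ 0) (hr : r < p) (f g : R⟦X⟧) :
    dissection p r (f * expand p hp g) = dissection p r f * g := by
  ext n
  rw [dissection, coeff_mk, coeff_mul, coeff_mul]
  symm
  refine sum_of_injOn (fun ij ↦ (p * ij.1 + r, p * ij.2)) ?_ ?_ ?_ ?_
  · rintro ⟨i, j⟩ - ⟨i', j'⟩ - h
    simpa [hp] using h
  · rintro ⟨i, j⟩ h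
    have hij : i + j = n := by simpa using h
    rw [mem_coe, HasAntidiagonal.mem_antidiagonal, ← hij]
    ring
  · rintro ⟨i, j⟩ hij hnot
    rw [coeff_expand_of_not_dvd, mul_zero]
    rintro ⟨j, rfl⟩
    have hij : i + p * j = p * n + r := by simpa using hij
    have hjn : j ≤ n := by
      by_contra! h
      have := Nat.mul_le_mul_left p h
      grind
    refine hnot ⟨(n - j, j), by simp [hjn], ?_⟩
    obtain ⟨i', rfl⟩ := Nat.exists_eq_add_of_le hjn
    simp only [add_tsub_cancel_left, Prod.mk.injEq, and_true]
    grind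
  · rintro ⟨i, j⟩ -
    simp [dissection]

theorem expand_zmod_card (p : ℕ) [Fact p.Prime] (hp : p ≠ 0) (f : (ZMod p)⟦X⟧) :
    expand p hp f = f ^ p := by
  have h := MvPowerSeries.map_frobenius_expand (σ := Unit) p hp (f := f)
  rw [ZMod.frobenius_zmod, MvPowerSeries.map_id] at h
  exact h

theorem expand_injective {p : ℕ} (hp : p ≠ 0) :
    Function.Injective (expand (R := R) p hp) := fun f g h ↦ by
  ext n
  simpa only [coeff_expand_mul] using congrArg (coeff (p * n)) h

end Dissection

section ThetaSeries

variable {ι κ : Type*}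

/-- The series `∑ i, X ^ u i`, for an exponent function `u` with finite fibres. It is defined by
counting fibres, so that no topology is needed; an infinite fibre would contribute `0`. -/
noncomputable def thetaSeries (R : Type*) [Semiring R] (u : ι → ℕ) : R⟦X⟧ :=
  .mk fun n ↦ (Nat.card {i // u i = n} : R)

theorem coeff_thetaSeries {R : Type*} [Semiring R] (u : ι → ℕ) (n : ℕ) :
    coeff n (thetaSeries R u) = Nat.card {i // u i = n} :=
  coeff_mk ..

theorem finite_fiber_of_injective {u : ι → ℕ} (hu : u.Injective) (n : ℕ) :
    Finite {i // u i = n} :=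
  (Set.finite_singleton n).preimage hu.injOn

theorem coeff_thetaSeries_ne_zero_iff {R : Type*} [Semiring R] [Nontrivial R] {u : ι → ℕ}
    (hu : u.Injective) {n : ℕ} : coeff n (thetaSeries R u) ≠ 0 ↔ n ∈ Set.range u := by
  rw [coeff_thetaSeries]
  refine ⟨fun h ↦ ?_, ?_⟩
  · by_contra hn
    have : IsEmpty {i // u i = n} := ⟨fun i ↦ hn ⟨_, i.2⟩⟩
    simp at h
  · rintro ⟨i, rfl⟩
    simp [hu.eq_iff]

theorem thetaSeries_mul {R : Type*} [Semiring R] {u : ι → ℕ} {v : κ → ℕ}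
    (hu : ∀ n, Finite {i // u i = n}) (hv : ∀ n, Finite {j // v j = n}) :
    thetaSeries R u * thetaSeries R v = thetaSeries R fun ij : ι × κ ↦ u ij.1 + v ij.2 := by
  ext n
  let e : {ij : ι × κ // u ij.1 + v ij.2 = n} ≃
      Σ ab : antidiagonal n, {i // u i = ab.1.1} × {j // v j = ab.1.2} :=
    { toFun ij := ⟨⟨(u ij.1.1, v ij.1.2), mem_antidiagonal.2 ij.2⟩, ⟨_, rfl⟩, ⟨_, rfl⟩⟩
      invFun x := ⟨(x.2.1, x.2.2), by
        rw [x.2.1.2, x.2.2.2, mem_antidiagonal.1 x.1.2]⟩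
      left_inv _ := rfl
      right_inv := by
        rintro ⟨⟨⟨a, b⟩, hab⟩, ⟨i, hi⟩, ⟨j, hj⟩⟩
        obtain rfl : u i = a := hi
        obtain rfl : v j = b := hj
        rfl }
  simp_rw [coeff_mul, coeff_thetaSeries, Nat.card_congr e, Nat.card_sigma, Nat.card_prod]
  push_cast
  exact (sum_coe_sort (antidiagonal n) fun ab ↦
    (Nat.card {i // u i = ab.1} * Nat.card {j // v j = ab.2} : R)).symm

theorem expand_thetaSeries {R : Type*} [CommRing R] {p : ℕ} (hp : p ≠ 0) (u : ι → ℕ) :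
    expand p hp (thetaSeries R u) = thetaSeries R fun i ↦ p * u i := by
  ext n
  rw [coeff_expand, coeff_thetaSeries, coeff_thetaSeries]
  split_ifs with h
  · obtain ⟨m, rfl⟩ := h
    simp [hp, Nat.mul_div_cancel_left m (Nat.pos_of_ne_zero hp)]
  · have : IsEmpty {i // p * u i = n} := ⟨fun i ↦ h ⟨_, i.2.symm⟩⟩
    simp

theorem finite_mul_natAbs_sq_eq {c : ℕ} (hc : c ≠ 0) (n : ℕ) :
    Finite {t : ℤ // c * t.natAbs ^ 2 = n} := by
  refine (Set.finite_Icc (-n : ℤ) n).subset fun t ht ↦ ?_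
  have : t.natAbs ≤ n := ht ▸ (Nat.le_self_pow two_ne_zero _).trans
    (Nat.le_mul_of_pos_left _ (Nat.pos_of_ne_zero hc))
  simp only [Set.mem_Icc]
  omega

theorem thetaSeries_mul_natAbs_sq {c : ℕ} (hc : c ≠ 0) :
    thetaSeries (ZMod 2) (fun t : ℤ ↦ c * t.natAbs ^ 2) = 1 := by
  ext n
  rw [coeff_thetaSeries, coeff_one]
  split_ifs with hn
  · simp [hn, hc]
  · by_cases h : ∃ t₀ : ℤ, c * t₀.natAbs ^ 2 = n
    · obtain ⟨t₀, rfl⟩ := h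
      have ht₀ : t₀ ≠ -t₀ := by
        intro h
        simp [show t₀ = 0 by omega] at hn
      have hpair : {t : ℤ | c * t.natAbs ^ 2 = c * t₀.natAbs ^ 2} = {t₀, -t₀} := by
        ext t
        simp [hc, Int.natAbs_eq_natAbs_iff]
      have hcard := Set.ncard_pair ht₀
      rw [← hpair] at hcard
      exact (congrArg (Nat.cast (R := ZMod 2)) hcard).trans (by decide)
    · have : IsEmpty {t : ℤ // c * t.natAbs ^ 2 = n} := ⟨fun t ↦ h ⟨_, t.2⟩⟩
      simp

theorem pentagonalSeries_eq_thetaSeries :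
    pentagonalSeries (ZMod 2) = thetaSeries (ZMod 2) pentagonal := by
  ext n
  rw [coeff_thetaSeries]
  by_cases h : n ∈ Set.range pentagonal
  · obtain ⟨k, rfl⟩ := h
    rcases Int.even_or_odd k with h | h <;>
    simp [pentagonal_inj, Int.negOnePow_even, Int.negOnePow_odd, h]
  · have : IsEmpty {k // pentagonal k = n} := ⟨fun k ↦ h ⟨_, k.2⟩⟩
    simp [coeff_pentagonalSeries_eq_zero _ h]

end ThetaSeries

section QuadraticForms

theorem twentyFour_mul_pentagonal_add_one (j : ℤ) :
    24 * (pentagonal j : ℤ) + 1 = (6 * j - 1) ^ 2 := by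
  linear_combination 12 * two_mul_natCast_pentagonal j

/-- The triangular numbers `0, 1, 3, 6, …`, the exponents in Jacobi's series for the cube of the
Euler product. -/
def triangular (k : ℕ) : ℕ :=
  k * (k + 1) / 2

theorem eight_mul_triangular_add_one (k : ℕ) :
    8 * (triangular k : ℤ) + 1 = (2 * k + 1) ^ 2 := by
  have h : 2 * triangular k = k * (k + 1) := Nat.two_mul_div_two_of_even (Nat.even_mul_succ_self k)
  zify at h
  linear_combination 4 * h

theorem triangular_injective : triangular.Injective := by
  intro k l h
  have hk := eight_mul_triangular_add_one k
  rw [h, eight_mul_triangular_add_one, sq_eq_sq₀ (by positivity) (by positivity)] at hk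
  omega

theorem sq_mul_add_add_mul_sq_sub {S : Type*} [CommRing S] (e s t : S) :
    (e * s + 3 * t) ^ 2 + 3 * e * (s - t) ^ 2 = (e + 3) * (e * s ^ 2 + 3 * t ^ 2) := by
  ring

theorem four_dvd_add_or_sub {x y : ℤ} (hx : Odd x) (hy : Odd y) :
    4 ∣ x + 3 * y ∨ 4 ∣ x - 3 * y := by
  rw [Int.odd_iff] at hx hy
  omega

theorem eight_dvd_add_or_sub_of_sq_add {x y m : ℤ} (h : x ^ 2 + 15 * y ^ 2 = 48 * m + 40) :
    8 ∣ x + 3 * y ∨ 8 ∣ x - 3 * y := by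
  have key : ∀ a b : ZMod 16, a ^ 2 + 15 * b ^ 2 = 8 →
      2 * (a + 3 * b) = 0 ∨ 2 * (a - 3 * b) = 0 := by decide
  have h16 : (x : ZMod 16) ^ 2 + 15 * (y : ZMod 16) ^ 2 = 8 := by
    have := congrArg (Int.cast (R := ZMod 16)) h
    push_cast at this
    rw [this, show (48 : ZMod 16) = 0 from rfl, zero_mul, zero_add]
    rfl
  refine (key x y h16).imp (fun h ↦ ?_) fun h ↦ ?_ <;>
  · norm_cast at h
    rw [ZMod.intCast_zmod_eq_zero_iff_dvd] at h
    omega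

/-- Writing `x = 6j - 1` and `y = ±(2k + 1)` for the square roots of `24 * pentagonal j + 1` and
`8 * triangular k + 1`, this is the change of variables `x = e * s + 3 * t`, `y = s - t` with
`s = 3i - e`, relating `p = (i, t)` to `q = (j, k)`. -/
structure ThetaRel (e : ℕ) (p : ℤ × ℤ) (q : ℤ × ℕ) : Prop where
  fst : 6 * q.1 - 1 = e * (3 * p.1 - e) + 3 * p.2
  snd : (3 * p.1 - e - p.2).natAbs = 2 * q.2 + 1

variable {e m n : ℕ} {p p' : ℤ × ℤ} {q q' : ℤ × ℕ}

theorem ThetaRel.pentagonal_add_eq_iff (hn : 24 * n + (3 * e + 1) = (e + 3) * (6 * m + e))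
    (h : ThetaRel e p q) :
    pentagonal q.1 + e * triangular q.2 = n ↔
      e * (3 * p.1 - e).natAbs ^ 2 + 3 * p.2.natAbs ^ 2 = 6 * m + e := by
  have hy : (3 * p.1 - e - p.2) ^ 2 = (2 * q.2 + 1 : ℤ) ^ 2 := by
    rw [← Int.natAbs_sq, h.snd]
    push_cast
    rfl
  have key : 24 * (pentagonal q.1 + e * triangular q.2 : ℤ) + (3 * e + 1) =
      (e + 3) * (e * (3 * p.1 - e) ^ 2 + 3 * p.2 ^ 2) := by
    rw [← sq_mul_add_add_mul_sq_sub, ← h.fst, hy, ← twentyFour_mul_pentagonal_add_one,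
      ← eight_mul_triangular_add_one]
    ring
  zify at hn ⊢
  rw [sq_abs, sq_abs, iff_comm, ← mul_right_inj' (show (e + 3 : ℤ) ≠ 0 by positivity), ← key, ← hn,
    add_left_inj, mul_right_inj' (by norm_num)]

theorem ThetaRel.left_unique (he : e = 1 ∨ e = 5) (h : ThetaRel e p q) (h' : ThetaRel e p' q) :
    p = p' := by
  obtain ⟨h₁, h₂⟩ := h
  obtain ⟨h₁', h₂'⟩ := h'
  rcases he with rfl | rfl <;> ext <;> omega

theorem ThetaRel.right_unique (h : ThetaRel e p q) (h' : ThetaRel e p q') : q = q' := by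
  obtain ⟨h₁, h₂⟩ := h
  obtain ⟨h₁', h₂'⟩ := h'
  ext <;> omega

theorem odd_sub_of_mul_sq_add_three_mul_sq {x y : ℤ} (he : Odd e)
    (h : e * x.natAbs ^ 2 + 3 * y.natAbs ^ 2 = 6 * m + e) : Odd (x - y) := by
  have hodd : Odd (e * x.natAbs ^ 2 + 3 * y.natAbs ^ 2) := by
    rw [h]
    exact ((even_two_mul 3).mul_right m).add_odd he
  simpa [Int.odd_sub, Nat.odd_add, Nat.odd_mul, Nat.odd_pow_iff, Nat.even_mul, Nat.even_pow,
    Nat.not_even_iff_odd.2 he, he, show ¬ Even 3 by decide] using hodd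

theorem ThetaRel.exists_right (he : e = 1 ∨ e = 5)
    (h : e * (3 * p.1 - e).natAbs ^ 2 + 3 * p.2.natAbs ^ 2 = 6 * m + e) :
    ∃ q, ThetaRel e p q := by
  have hodd : Odd (3 * p.1 - e - p.2) := by
    refine odd_sub_of_mul_sq_add_three_mul_sq ?_ h
    rcases he with rfl | rfl <;> decide
  rw [Int.odd_iff] at hodd
  refine ⟨((e * (3 * p.1 - e) + 3 * p.2 + 1) / 6, (3 * p.1 - e - p.2).natAbs / 2), ?_, ?_⟩
  · rcases he with rfl | rfl <;> omega
  · omega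

theorem ThetaRel.exists_left (he : e = 1 ∨ e = 5)
    (hn : 24 * n + (3 * e + 1) = (e + 3) * (6 * m + e))
    (h : pentagonal q.1 + e * triangular q.2 = n) :
    ∃ p, ThetaRel e p q := by
  obtain ⟨j, k⟩ := q
  have hdvd : (e + 3 : ℤ) ∣ (6 * j - 1) + 3 * (2 * k + 1) ∨
      (e + 3 : ℤ) ∣ (6 * j - 1) - 3 * (2 * k + 1) := by
    rcases he with rfl | rfl
    · exact four_dvd_add_or_sub ⟨3 * j - 1, by ring⟩ ⟨k, rfl⟩
    · refine eight_dvd_add_or_sub_of_sq_add (m := m) ?_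
      rw [← twentyFour_mul_pentagonal_add_one, ← eight_mul_triangular_add_one]
      simp only at h
      omega
  obtain ⟨y, hy, s, hs⟩ : ∃ y : ℤ, y.natAbs = 2 * k + 1 ∧ (e + 3 : ℤ) ∣ (6 * j - 1) + 3 * y :=
    hdvd.elim (fun h ↦ ⟨2 * k + 1, by omega, h⟩) fun h ↦ ⟨-(2 * k + 1), by omega, by grind⟩
  refine ⟨((s + e) / 3, s - y), ?_, ?_⟩ <;> rcases he with rfl | rfl <;> grind

theorem card_pentagonal_add_mul_triangular (he : e = 1 ∨ e = 5)
    (hn : 24 * n + (3 * e + 1) = (e + 3) * (6 * m + e)) :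
    Nat.card {q : ℤ × ℕ // pentagonal q.1 + e * triangular q.2 = n} =
      Nat.card {p : ℤ × ℤ // e * (3 * p.1 - e).natAbs ^ 2 + 3 * p.2.natAbs ^ 2 = 6 * m + e} := by
  choose f hf using fun q : {q : ℤ × ℕ // pentagonal q.1 + e * triangular q.2 = n} ↦
    ThetaRel.exists_left he hn q.2
  refine Nat.card_eq_of_bijective
    (fun q ↦ ⟨f q, ((hf q).pentagonal_add_eq_iff hn).1 q.2⟩) ⟨fun q q' h ↦ ?_, fun p ↦ ?_⟩
  · have h : f q = f q' := congrArg Subtype.val h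
    exact Subtype.ext ((hf q).right_unique (h ▸ hf q'))
  · obtain ⟨q, hq⟩ := ThetaRel.exists_right he p.2
    let q' : {q : ℤ × ℕ // pentagonal q.1 + e * triangular q.2 = n} :=
      ⟨q, (hq.pentagonal_add_eq_iff hn).2 p.2⟩
    exact ⟨q', Subtype.ext ((hf q').left_unique he hq)⟩

theorem card_mul_natAbs_sq_eq_card_pentagonal (he : e = 1 ∨ e = 5) (m : ℕ) :
    Nat.card {i : ℤ // e * (3 * i - e).natAbs ^ 2 = 6 * m + e} =
      Nat.card {k : ℤ // 4 * e * pentagonal k = m} := by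
  obtain ⟨g, hinj, hg, hsurj⟩ : ∃ g : ℤ → ℤ, g.Injective ∧
      (∀ k, (3 * g k - e).natAbs = (6 * k - 1).natAbs) ∧ ∀ i, Even i → ∃ k, g k = i := by
    rcases he with rfl | rfl
    · exact ⟨fun k ↦ 2 * k, fun _ _ _ ↦ by grind, fun k ↦ by grind, fun i hi ↦ by grind⟩
    · exact ⟨fun k ↦ 2 - 2 * k, fun _ _ _ ↦ by grind, fun k ↦ by grind,
        fun i ⟨j, hj⟩ ↦ ⟨1 - j, by grind⟩⟩
  have hiff (k : ℤ) : e * (3 * g k - e).natAbs ^ 2 = 6 * m + e ↔ 4 * e * pentagonal k = m := by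
    zify
    rw [← Int.natCast_natAbs, hg, Int.natCast_natAbs, sq_abs, ← twentyFour_mul_pentagonal_add_one]
    constructor <;> intro h <;> linarith
  have heven {i : ℤ} (h : e * (3 * i - e).natAbs ^ 2 = 6 * m + e) : Even i := by
    have hodd : Odd (3 * i - e - 0) :=
      odd_sub_of_mul_sq_add_three_mul_sq (by rcases he with rfl | rfl <;> decide) h
    rcases he with rfl | rfl <;> grind
  refine (Nat.card_eq_of_bijective (fun k ↦ ⟨g k, (hiff k).2 k.2⟩) ⟨fun k l h ↦ ?_, ?_⟩).symm
  · exact Subtype.ext (hinj (congrArg Subtype.val h))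
  · rintro ⟨i, hi⟩
    obtain ⟨k, rfl⟩ := hsurj i (heven hi)
    exact ⟨⟨k, (hiff k).1 hi⟩, rfl⟩

theorem mul_natAbs_three_mul_sub_sq_injective (he : e = 1 ∨ e = 5) :
    Function.Injective fun i : ℤ ↦ e * (3 * i - e).natAbs ^ 2 := by
  intro i j h
  have hij : (3 * i - e).natAbs = (3 * j - e).natAbs := by
    rcases he with rfl | rfl <;> simpa using h
  rcases he with rfl | rfl <;> omega

theorem coeff_pentagonalSeries_mul_expand (he : e = 1 ∨ e = 5) (he₀ : e ≠ 0)
    (hn : 24 * n + (3 * e + 1) = (e + 3) * (6 * m + e)) :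
    coeff n (pentagonalSeries (ZMod 2) * expand e he₀ (thetaSeries (ZMod 2) triangular)) =
      coeff m (expand (4 * e) (by positivity) (pentagonalSeries (ZMod 2))) := by
  have hu := mul_natAbs_three_mul_sub_sq_injective he
  have hv : Function.Injective fun k ↦ e * triangular k :=
    (mul_right_injective₀ he₀).comp triangular_injective
  rw [pentagonalSeries_eq_thetaSeries, expand_thetaSeries, expand_thetaSeries,
    thetaSeries_mul (finite_fiber_of_injective pentagonal_injective)
      (finite_fiber_of_injective hv),
    coeff_thetaSeries, card_pentagonal_add_mul_triangular he hn, ← coeff_thetaSeries,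
    ← thetaSeries_mul (finite_fiber_of_injective hu) (finite_mul_natAbs_sq_eq three_ne_zero),
    thetaSeries_mul_natAbs_sq three_ne_zero, mul_one, coeff_thetaSeries, coeff_thetaSeries,
    card_mul_natAbs_sq_eq_card_pentagonal he]

end QuadraticForms

section Product

theorem hasProd_mk_card_distincts_filter (R : Type*) [CommSemiring R] [TopologicalSpace R]
    [T2Space R] (P : ℕ → Prop) [DecidablePred P] :
    HasProd (fun i ↦ if P (i + 1) then 1 + X ^ (i + 1) else 1)
      (mk fun n ↦ (#{p ∈ Nat.Partition.distincts n | ∀ i ∈ p.parts, P i} : R)) := by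
  nontriviality R using Subsingleton.eq_one (α := R⟦X⟧)
  convert! Nat.Partition.hasProd_genFun
    (fun i c ↦ if c < 2 ∧ P i then (1 : R) else 0) using 1
  · ext1 i
    rw [tsum_eq_single 0 (fun c hc ↦ by simp [hc])]
    split_ifs <;> simp_all
  · ext n
    simp_rw [coeff_mk, Nat.Partition.coeff_genFun, Nat.Partition.distincts, filter_filter,
      card_filter, Finsupp.prod, prod_boole]
    push_cast
    refine sum_congr rfl fun p _ ↦ if_congr ?_ rfl rfl
    simp only [Multiset.toFinsupp_support, Multiset.mem_toFinset, Multiset.toFinsupp_apply,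
      Multiset.nodup_iff_count_le_one]
    grind [Multiset.count_eq_zero]

variable (R : Type*) [CommRing R] [TopologicalSpace R]

theorem continuous_expand {p : ℕ} (hp : p ≠ 0) : Continuous (expand (R := R) p hp) := by
  refine continuous_iff_continuousAt.2 fun f ↦ ?_
  rw [ContinuousAt, tendsto_iff_coeff_tendsto]
  intro d
  simp_rw [coeff_expand]
  split_ifs
  · exact (continuous_coeff R _).continuousAt
  · exact tendsto_const_nhds

theorem hasProd_expand_pentagonalSeries {p : ℕ} (hp : p ≠ 0) :
    HasProd (fun i ↦ if p ∣ i + 1 then 1 - X ^ (i + 1) else 1)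
      (expand p hp (pentagonalSeries R)) := by
  have hinj : Function.Injective fun i : ℕ ↦ p * (i + 1) - 1 := fun i j h ↦ by
    have hi := Nat.mul_pos (Nat.pos_of_ne_zero hp) i.succ_pos
    have hj := Nat.mul_pos (Nat.pos_of_ne_zero hp) j.succ_pos
    have : p * (i + 1) = p * (j + 1) := by grind
    simpa [hp] using this
  rw [← hinj.hasProd_iff]
  · convert (hasProd_one_sub_X_pow R).map (expand p hp) (continuous_expand R hp) using 1
    ext1 i
    have : p * (i + 1) - 1 + 1 = p * (i + 1) :=
      Nat.sub_add_cancel (Nat.mul_pos (Nat.pos_of_ne_zero hp) i.succ_pos)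
    simp [this, pow_mul]
  · intro i hi
    rw [if_neg]
    rintro ⟨_ | k, hk⟩
    · simp at hk
    · exact hi ⟨k, by simp [← hk]⟩

end Product

section ModTwo

theorem pentagonalSeries_zmod_two_ne_zero : pentagonalSeries (ZMod 2) ≠ 0 := by
  intro h
  simpa [h] using coeff_pentagonalSeries_pentagonal (R := ZMod 2) 0

theorem thetaSeries_triangular_zmod_two :
    thetaSeries (ZMod 2) triangular = pentagonalSeries (ZMod 2) ^ 3 := by
  refine mul_left_cancel₀ pentagonalSeries_zmod_two_ne_zero ?_
  calc pentagonalSeries (ZMod 2) * thetaSeries (ZMod 2) triangular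
    _ = pentagonalSeries (ZMod 2) * expand 1 one_ne_zero (thetaSeries (ZMod 2) triangular) := by
      rw [expand_one, AlgHom.id_apply]
    _ = expand (2 * 2) four_ne_zero (pentagonalSeries (ZMod 2)) := by
      ext n
      exact coeff_pentagonalSeries_mul_expand (.inl rfl) one_ne_zero (by ring)
    _ = pentagonalSeries (ZMod 2) * pentagonalSeries (ZMod 2) ^ 3 := by
      rw [expand_mul 2 two_ne_zero 2 two_ne_zero, expand_zmod_card, expand_zmod_card]
      ring

theorem dissection_pentagonalSeries_mul_expand_triangular :
    dissection 2 1
        (pentagonalSeries (ZMod 2) * expand 5 (by norm_num) (thetaSeries (ZMod 2) triangular)) =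
      expand 20 (by norm_num) (pentagonalSeries (ZMod 2)) := by
  ext m
  rw [dissection, coeff_mk]
  exact coeff_pentagonalSeries_mul_expand (.inr rfl) (by norm_num) (by ring)

theorem mk_b5'_mul_expand_pentagonalSeries :
    (mk fun n ↦ (b5' n : ZMod 2)) * expand 5 (by norm_num) (pentagonalSeries (ZMod 2)) =
      pentagonalSeries (ZMod 2) := by
  have : CharP (ZMod 2)⟦X⟧ 2 := charP_of_injective_ringHom C_injective 2
  refine ((hasProd_mk_card_distincts_filter (ZMod 2) (¬ 5 ∣ ·)).mul
    (hasProd_expand_pentagonalSeries (ZMod 2) (by norm_num))).unique ?_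
  refine (hasProd_one_sub_X_pow (ZMod 2)).congr_fun fun i ↦ ?_
  by_cases h : 5 ∣ i + 1 <;> simp [h, CharTwo.sub_eq_add]

theorem dissection_mk_b5' :
    dissection 2 1 (mk fun n ↦ (b5' n : ZMod 2)) =
      expand 10 (by norm_num) (pentagonalSeries (ZMod 2)) := by
  have hB := mk_b5'_mul_expand_pentagonalSeries
  have hψ := dissection_pentagonalSeries_mul_expand_triangular
  set B : (ZMod 2)⟦X⟧ := mk fun n ↦ (b5' n : ZMod 2)
  set f := pentagonalSeries (ZMod 2)
  set g := expand 5 (by norm_num) f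
  have hg : g ≠ 0 :=
    (map_ne_zero_iff _ (expand_injective _)).2 pentagonalSeries_zmod_two_ne_zero
  have hf₁₀ : expand 10 (by norm_num) f = g ^ 2 := by
    rw [← expand_zmod_card 2 two_ne_zero, ← expand_mul]
  have hf₂₀ : expand 20 (by norm_num) f = expand 10 (by norm_num) f ^ 2 := by
    rw [← expand_zmod_card 2 two_ne_zero, ← expand_mul]
  have hBg : B * expand 2 two_ne_zero (g ^ 2) =
      f * expand 5 (by norm_num) (thetaSeries (ZMod 2) triangular) := by
    rw [thetaSeries_triangular_zmod_two, map_pow, map_pow, expand_zmod_card]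
    linear_combination g ^ 3 * hB
  refine mul_right_cancel₀ (pow_ne_zero 2 hg) ?_
  calc dissection 2 1 B * g ^ 2
    _ = dissection 2 1 (B * expand 2 two_ne_zero (g ^ 2)) :=
      (dissection_mul_expand two_ne_zero one_lt_two B _).symm
    _ = expand 20 (by norm_num) f := by rw [hBg, hψ]
    _ = expand 10 (by norm_num) f * g ^ 2 := by rw [hf₂₀, hf₁₀, sq (g ^ 2)]

end ModTwo

theorem b5'_odd_iff (n : ℕ) :
    Odd (b5' (2 * n + 1)) ↔ ∃ k : ℤ, (n : ℤ) = 15 * k ^ 2 - 5 * k := by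
  have hcoeff : (b5' (2 * n + 1) : ZMod 2) =
      coeff n (thetaSeries (ZMod 2) fun k ↦ 10 * pentagonal k) := by
    rw [← expand_thetaSeries (by norm_num), ← pentagonalSeries_eq_thetaSeries,
      ← dissection_mk_b5', dissection, coeff_mk, coeff_mk]
  have hinj : Function.Injective fun k ↦ 10 * pentagonal k :=
    (mul_right_injective₀ (by norm_num)).comp pentagonal_injective
  rw [← Nat.not_even_iff_odd, ← ZMod.natCast_eq_zero_iff_even, hcoeff, ← ne_eq,
    coeff_thetaSeries_ne_zero_iff hinj]
  refine exists_congr fun k ↦ ?_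
  have hk := two_mul_natCast_pentagonal k
  zify
  constructor <;> intro h <;> linarith
end

section
/- For every nonnegative integer n, b'₅(20n+7) ≡ 0 (mod 4). -/
/-!
Write `E = ∏ (1 - qⁿ)`, let `ψ = f(q, q³)` and `φ = f(q, q)` be Ramanujan's theta functions, let
`G` be the generating function of `b5'`, and abbreviate `F(qᵏ)` to `Fₖ`. Since `2ψ` is the sum of
`q ^ (j (j + 1) / 2)` over all integers `j`, splitting the lattice sum for `(2ψ)²` according to
`i - 2j` modulo `5` and applying the Jacobi triple product gives `E₅² G = ψ² - q ψ₅²`.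
As `ψ² = φ ψ₂` and `E² φ ≡ E₂` modulo `4`, this becomes `E₁₀ G ≡ φ φ₅ ψ₂ - q φ₅ ψ₅²`. The
`2`-dissections of `φ` and, modulo `2`, of `E E₅` then write `G` modulo `4` as a series in `q²`,
plus `q` times a series in `q⁵`, plus `2q` times a series in `q⁴`, plus `2 q³ E₈ ψ₂₀`. Only the
last term can meet an exponent `20n + 7`, and its coefficient there vanishes because no generalized
pentagonal number is `3` modulo `5`.
-/

open PowerSeries Finset Filter
open scoped PowerSeries.WithPiTopology

namespace QSeries

section Topology

@[to_additive]
theorem tprod_eq_prod_tprod_of_bijective {M ι α β : Type*} [CommMonoid M] [TopologicalSpace M]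
    [ContinuousMul M] [T3Space M] [Fintype ι] {g : α → M} {m : ι → β → α}
    (hm : Function.Bijective m.uncurry) (hg : Multipliable g)
    (hgm : ∀ i, Multipliable fun b => g (m i b)) :
    ∏' a, g a = ∏ i, ∏' b, g (m i b) := by
  let e : ι × β ≃ α := .ofBijective _ hm
  have hge : Multipliable fun c => g (e c) := e.multipliable_iff.2 hg
  calc ∏' a, g a = ∏' c, g (e c) := (e.tprod_eq g).symm
    _ = ∏' i, ∏' b, g (m i b) := hge.tprod_prod' hgm
    _ = _ := tprod_fintype _

theorem tprod_nat_eq_prod_fin_tprod {M : Type*} [CommMonoid M] [TopologicalSpace M]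
    [ContinuousMul M] [T3Space M] (k : ℕ) [NeZero k] {g : ℕ → M} (hg : Multipliable g)
    (hgk : ∀ i : Fin k, Multipliable fun n => g (i + k * n)) :
    ∏' n, g n = ∏ i : Fin k, ∏' n, g (i + k * n) := by
  refine tprod_eq_prod_tprod_of_bijective (m := fun (i : Fin k) n => (i : ℕ) + k * n) ?_ hg hgk
  convert (Nat.divModEquiv k).symm.bijective.comp (Equiv.prodComm (Fin k) ℕ).bijective using 1
  ext p
  simp [Function.uncurry, Nat.divModEquiv, mul_comm, add_comm]

variable {R : Type*} [CommRing R] [TopologicalSpace R]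

theorem continuous_expand {k : ℕ} (hk : k ≠ 0) : Continuous (expand k hk (R := R)) := by
  rw [continuous_iff_continuousAt]
  intro F
  rw [ContinuousAt, WithPiTopology.tendsto_iff_coeff_tendsto]
  intro d
  simp only [coeff_expand]
  split_ifs
  · exact (WithPiTopology.continuous_coeff R _).tendsto F
  · exact tendsto_const_nhds

theorem summable_X_pow {ι : Type*} {e : ι → ℕ} (he : Tendsto e cofinite atTop) :
    Summable fun i => (X : R⟦X⟧) ^ e i := by
  rw [WithPiTopology.summable_iff_summable_coeff]
  refine fun d => summable_of_hasFiniteSupport <|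
    Set.Finite.subset (he.eventually_gt_atTop d) fun i hi (hd : d < e i) => hi ?_
  simp only [coeff_X_pow, if_neg hd.ne]

theorem multipliable_one_add_X_pow {e : ℕ → ℕ} (he : Tendsto e atTop atTop) :
    Multipliable fun n => 1 + (X : R⟦X⟧) ^ e n := by
  nontriviality R
  refine WithPiTopology.multipliable_one_add_of_tendsto_order_atTop_nhds_top R ?_
  simp only [order_X_pow]
  exact ENat.tendsto_natCast_nhds_top.comp he

variable [T2Space R]

theorem eq_of_tendsto_of_X_pow_dvd_sub {s t : ℕ → R⟦X⟧} {F G : R⟦X⟧}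
    (hs : Tendsto s atTop (nhds F)) (ht : Tendsto t atTop (nhds G))
    (h : ∀ N, X ^ N ∣ s N - t N) : F = G := by
  rw [WithPiTopology.tendsto_iff_coeff_tendsto] at hs ht
  ext d
  refine tendsto_nhds_unique_of_eventuallyEq (hs d) (ht d) ?_
  filter_upwards [eventually_gt_atTop d] with N hN
  rw [← sub_eq_zero, ← map_sub, X_pow_dvd_iff.1 (h N) d hN]

theorem hasProd_distincts_filter (p : ℕ → Prop) [DecidablePred p] :
    HasProd (fun i => if p (i + 1) then 1 + X ^ (i + 1) else 1)
      (PowerSeries.mk fun n => (#{l ∈ Nat.Partition.distincts n | ∀ i ∈ l.parts, p i} : R)) := by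
  convert! Nat.Partition.hasProd_genFun (fun i c => if p i ∧ c < 2 then (1 : R) else 0) using 1
  · ext1 i
    rw [tsum_eq_single 0 fun j hj => by simp [hj]]
    by_cases hi : p (i + 1) <;> simp [hi]
  · ext n
    simp only [coeff_mk, Nat.Partition.coeff_genFun, Finsupp.prod, prod_boole,
      Nat.Partition.distincts, filter_filter, natCast_card_filter]
    refine sum_congr rfl fun l _ => if_congr ?_ rfl rfl
    simp only [Multiset.toFinsupp_support, Multiset.mem_toFinset, Multiset.toFinsupp_apply,
      Multiset.nodup_iff_count_eq_one]
    refine ⟨fun ⟨hl, hp⟩ i hi => ⟨hp i hi, by simp [hl i hi]⟩,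
      fun h => ⟨fun i hi => ?_, fun i hi => (h i hi).1⟩⟩
    exact le_antisymm (Nat.lt_succ_iff.1 (h i hi).2) (Multiset.one_le_count_iff_mem.2 hi)

end Topology

section GaussianBinomial

variable {R : Type*} [CommRing R]

/-- The Gaussian binomial coefficient `[n, k]_q`, defined by the `q`-Pascal rule. -/
def gaussBinom (q : R) : ℕ → ℕ → R
  | _, 0 => 1
  | 0, _ + 1 => 0
  | n + 1, k + 1 => gaussBinom q n k + q ^ (k + 1) * gaussBinom q n (k + 1)

/-- The finite `q`-Pochhammer symbol `(q; q)_n`. -/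
def qPochhammer (q : R) (n : ℕ) : R := ∏ i ∈ range n, (1 - q ^ (i + 1))

/-- The triangular number `j (j + 1) / 2` for an integer `j`; note that
`triangular (-1 - j) = triangular j`. -/
def triangular (j : ℤ) : ℕ := (j * (j + 1) / 2).toNat

@[simp]
theorem gaussBinom_zero_right (q : R) (n : ℕ) : gaussBinom q n 0 = 1 := by
  cases n <;> rfl

theorem gaussBinom_eq_zero_of_lt (q : R) {n k : ℕ} (h : n < k) : gaussBinom q n k = 0 := by
  induction n, k using gaussBinom.induct with
  | case1 => omega
  | case2 => rfl
  | case3 n k ih₁ ih₂ => rw [gaussBinom, ih₁ (by omega), ih₂ (by omega), mul_zero, add_zero]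

theorem sum_gaussBinom_succ (q : R) (n : ℕ) (h : ℕ → R) :
    ∑ k ∈ range (n + 2), gaussBinom q (n + 1) k * h k =
      ∑ k ∈ range (n + 1), gaussBinom q n k * (h (k + 1) + q ^ k * h k) := by
  have shift : ∑ k ∈ range (n + 1), gaussBinom q n k * (q ^ k * h k) =
      ∑ k ∈ range (n + 1), gaussBinom q n (k + 1) * (q ^ (k + 1) * h (k + 1)) + h 0 := by
    rw [sum_range_succ', sum_range_succ _ n, gaussBinom_eq_zero_of_lt q n.lt_succ_self]
    simp
  simp only [mul_add, sum_add_distrib]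
  rw [shift, sum_range_succ', gaussBinom_zero_right, one_mul, ← add_assoc, ← sum_add_distrib]
  congr 1
  refine sum_congr rfl fun k _ => ?_
  rw [gaussBinom]
  ring

theorem prod_one_add_mul_pow_eq_sum_gaussBinom (q x : R) (n : ℕ) :
    ∏ i ∈ range n, (1 + x * q ^ i) =
      ∑ k ∈ range (n + 1), gaussBinom q n k * (q ^ k.choose 2 * x ^ k) := by
  induction n generalizing x with
  | zero => simp
  | succ n ih =>
    have shift : ∏ i ∈ range n, (1 + x * q ^ (i + 1)) = ∏ i ∈ range n, (1 + x * q * q ^ i) :=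
      prod_congr rfl fun i _ => by ring
    rw [prod_range_succ', shift, ih, sum_gaussBinom_succ, sum_mul]
    refine sum_congr rfl fun k _ => ?_
    rw [Nat.choose_succ_succ' k 1, Nat.choose_one_right]
    ring

theorem two_mul_triangular (j : ℤ) : 2 * (triangular j : ℤ) = j * (j + 1) := by
  have nonneg : 0 ≤ j * (j + 1) := by
    rcases le_or_gt 0 j with h | h <;> nlinarith
  rw [triangular, Int.toNat_of_nonneg (by omega),
    Int.mul_ediv_cancel' (Int.even_mul_succ_self j).two_dvd]

theorem triangular_eq_add (j : ℤ) : (triangular j : ℤ) = triangular (j - 1) + j := by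
  linarith [two_mul_triangular j, two_mul_triangular (j - 1)]

theorem triangular_natCast (k : ℕ) : triangular k = k + k.choose 2 := by
  have choose_succ : k + k.choose 2 = (k + 1).choose 2 := by
    rw [Nat.choose_succ_succ' k 1, Nat.choose_one_right]
  rw [choose_succ, Nat.choose_two_right, Nat.add_sub_cancel, mul_comm, triangular]
  norm_cast

theorem triangular_sub_sub_one_add (k n : ℕ) :
    triangular (k - n - 1) + k = n + triangular (k - n) := by
  have := triangular_eq_add (k - n)
  omega

theorem prod_mul_prod_eq_sum_gaussBinom (x y : R) (m n : ℕ) :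
    (∏ i ∈ range m, (1 + x * (x * y) ^ i)) * ∏ i ∈ range n, (1 + y * (x * y) ^ i) =
      ∑ k ∈ range (m + n + 1), gaussBinom (x * y) (m + n) k *
        (x ^ triangular (k - n) * y ^ triangular (k - n - 1)) := by
  induction n with
  | zero =>
    rw [range_zero, prod_empty, mul_one, prod_one_add_mul_pow_eq_sum_gaussBinom]
    refine sum_congr rfl fun k _ => ?_
    have hx := triangular_natCast k
    have hy : triangular (k - 1) = k.choose 2 := by
      have := triangular_eq_add k
      omega
    rw [Nat.cast_zero, sub_zero, add_zero, hx, hy]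
    ring
  | succ n ih =>
    set q := x * y
    set g : ℕ → ℕ → R := fun n k => x ^ triangular (k - n) * y ^ triangular (k - n - 1)
    have g_add_one (k : ℕ) : g (n + 1) (k + 1) = g n k := by simp [g]
    have q_pow_mul (k : ℕ) : q ^ k * g (n + 1) k = y * q ^ n * g n k := by
      have hx := triangular_sub_sub_one_add k n
      have hy := triangular_sub_sub_one_add k (n + 1)
      simp only [g, q, Nat.cast_add_one, ← sub_sub] at hy ⊢
      calc _ = x ^ (triangular (k - n - 1) + k) * y ^ (triangular (k - n - 1 - 1) + k) := by ring
        _ = _ := by rw [hx, hy]; ring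
    rw [prod_range_succ, ← mul_assoc, ih, ← add_assoc m, sum_gaussBinom_succ q _ (g (n + 1)),
      sum_mul]
    refine sum_congr rfl fun k _ => ?_
    rw [g_add_one, q_pow_mul]
    ring

theorem qPochhammer_succ (q : R) (n : ℕ) :
    qPochhammer q (n + 1) = qPochhammer q n * (1 - q ^ (n + 1)) :=
  prod_range_succ _ _

theorem gaussBinom_mul_qPochhammer_mul_qPochhammer (q : R) (k l : ℕ) :
    gaussBinom q (k + l) k * qPochhammer q k * qPochhammer q l = qPochhammer q (k + l) := by
  induction k generalizing l with
  | zero => simp [qPochhammer]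
  | succ k ihk =>
    induction l with
    | zero =>
      have h := ihk 0
      rw [add_zero, gaussBinom, gaussBinom_eq_zero_of_lt q k.lt_succ_self, qPochhammer_succ]
      rw [add_zero] at h
      linear_combination (1 - q ^ (k + 1)) * h
    | succ l ihl =>
      have h := ihk (l + 1)
      rw [add_right_comm k 1 l] at ihl
      rw [← add_assoc] at h
      rw [← add_assoc, add_right_comm k 1 l, gaussBinom, qPochhammer_succ q (k + l + 1)]
      simp only [qPochhammer_succ q k, qPochhammer_succ q l] at h ihl ⊢
      linear_combination (1 - q ^ (k + 1)) * h + q ^ (k + 1) * (1 - q ^ (l + 1)) * ihl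

theorem pow_succ_dvd_qPochhammer_sub (q : R) {m n : ℕ} (h : m ≤ n) :
    q ^ (m + 1) ∣ qPochhammer q n - qPochhammer q m := by
  induction n, h using Nat.le_induction with
  | base => simp
  | succ n hn ih =>
    rw [qPochhammer_succ, mul_one_sub, sub_right_comm]
    exact dvd_sub ih (dvd_mul_of_dvd_right (pow_dvd_pow _ (by omega)) _)

theorem pow_succ_dvd_qPochhammer_mul_gaussBinom_sub_one {q : R} {k l m n : ℕ} (hk : m ≤ k)
    (hl : m ≤ l) (hn : m ≤ n) (unit : IsUnit (qPochhammer q m)) :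
    q ^ (m + 1) ∣ qPochhammer q n * gaussBinom q (k + l) k - 1 := by
  rw [← unit.dvd_mul_left]
  obtain ⟨a, ha⟩ := pow_succ_dvd_qPochhammer_sub q hk
  obtain ⟨b, hb⟩ := pow_succ_dvd_qPochhammer_sub q hl
  obtain ⟨c, hc⟩ := pow_succ_dvd_qPochhammer_sub q hn
  obtain ⟨d, hd⟩ := pow_succ_dvd_qPochhammer_sub q (show m ≤ k + l by omega)
  have h := gaussBinom_mul_qPochhammer_mul_qPochhammer q k l
  set u := qPochhammer q m
  set g := gaussBinom q (k + l) k
  refine ⟨c * u * g + d - g * (a * qPochhammer q l + u * b), ?_⟩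
  linear_combination u * g * hc + h + hd - g * qPochhammer q l * ha - g * u * hb

end GaussianBinomial

theorem natCast_dvd_iff_forall_dvd_coeff {R : Type*} [CommRing R] (m : ℕ) (F : R⟦X⟧) :
    (m : R⟦X⟧) ∣ F ↔ ∀ n, (m : R) ∣ coeff n F := by
  have hm : (m : R⟦X⟧) = C (m : R) := (map_natCast C m).symm
  rw [hm]
  refine ⟨fun ⟨G, hG⟩ n => ⟨coeff n G, by rw [hG, coeff_C_mul]⟩, fun h => ?_⟩
  choose c hc using h
  exact ⟨PowerSeries.mk c, PowerSeries.ext fun n => by rw [hc, coeff_C_mul, coeff_mk]⟩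

section Dilation

/-- The substitution `F(X) ↦ F(X ^ k)` for a positive integer `k`. -/
noncomputable def dilate (k : ℕ) [NeZero k] : ℤ⟦X⟧ →ₐ[ℤ] ℤ⟦X⟧ := expand k (NeZero.ne k)

variable (k : ℕ) [NeZero k]

@[simp]
theorem dilate_X : dilate k X = X ^ k := expand_X ..

theorem dilate_dilate (l : ℕ) [NeZero l] (F : ℤ⟦X⟧) :
    dilate k (dilate l F) = dilate (k * l) F :=
  (expand_mul k (NeZero.ne k) l (NeZero.ne l) F).symm

theorem coeff_dilate_of_not_dvd {n : ℕ} (h : ¬ k ∣ n) (F : ℤ⟦X⟧) : coeff n (dilate k F) = 0 :=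
  coeff_expand_of_not_dvd k _ F h

theorem coeff_mul_dilate (n : ℕ) (F : ℤ⟦X⟧) : coeff (k * n) (dilate k F) = coeff n F :=
  coeff_expand_mul k _ F n

theorem continuous_dilate : Continuous (dilate k) := continuous_expand _

theorem prime_dvd_pow_sub_dilate (p : ℕ) [hp : Fact p.Prime] (F : ℤ⟦X⟧) :
    (p : ℤ⟦X⟧) ∣ F ^ p - dilate p F := by
  let π := PowerSeries.map (Int.castRingHom (ZMod p))
  have frobenius : π (F ^ p - dilate p F) = 0 := by
    have h := MvPowerSeries.map_frobenius_expand p hp.out.ne_zero (f := π F)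
    rw [ZMod.frobenius_zmod, MvPowerSeries.map_id] at h
    rw [map_sub, map_pow, sub_eq_zero, ← h]
    exact (map_expand ..).symm
  rw [natCast_dvd_iff_forall_dvd_coeff]
  intro n
  refine (ZMod.intCast_zmod_eq_zero_iff_dvd _ p).1 ?_
  simpa only [π, coeff_map, eq_intCast, map_zero] using congrArg (coeff n) frobenius

theorem isUnit_dilate {F : ℤ⟦X⟧} (hF : IsUnit F) : IsUnit (dilate k F) := hF.map _

end Dilation

/-- The exponent `a j (j + 1) / 2 + b j (j - 1) / 2` of the general theta series. -/
def thetaExp (a b : ℕ) (j : ℤ) : ℕ := a * triangular j + b * triangular (j - 1)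

/-- Ramanujan's general theta function `f(X ^ a, X ^ b)`. -/
noncomputable def theta (a b : ℕ) : ℤ⟦X⟧ := ∑' j, X ^ thetaExp a b j

/-- The infinite product `∏ (1 + X ^ (a + c n))` over `n ≥ 0`. -/
noncomputable def oneAddProd (a c : ℕ) : ℤ⟦X⟧ := ∏' n, (1 + X ^ (a + c * n))

theorem two_mul_thetaExp (a b : ℕ) (j : ℤ) :
    2 * (thetaExp a b j : ℤ) = a * (j * (j + 1)) + b * (j * (j - 1)) := by
  have h := two_mul_triangular j
  have h' := two_mul_triangular (j - 1)
  push_cast [thetaExp]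
  linear_combination a * h + b * h'

theorem natAbs_le_thetaExp_add_one {a b : ℕ} (h : a + b ≠ 0) (j : ℤ) :
    j.natAbs ≤ thetaExp a b j + 1 := by
  have hj : j.natAbs ≤ triangular j + 1 := by
    have := triangular_eq_add j
    have := triangular_eq_add (j + 1)
    rw [add_sub_cancel_right] at this
    omega
  have hj' : j.natAbs ≤ triangular (j - 1) + 1 := by
    have := triangular_eq_add j
    have := triangular_eq_add (j - 1)
    omega
  rcases Nat.eq_zero_or_pos a with rfl | ha
  · have : 1 * triangular (j - 1) ≤ b * triangular (j - 1) := by gcongr; omega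
    rw [thetaExp]
    omega
  · have : 1 * triangular j ≤ a * triangular j := by gcongr; omega
    rw [thetaExp]
    omega

theorem tendsto_thetaExp {a b : ℕ} (h : a + b ≠ 0) : Tendsto (thetaExp a b) cofinite atTop := by
  refine tendsto_atTop.2 fun n => (Set.finite_Icc (-n - 1 : ℤ) (n + 1)).subset fun j hj => ?_
  have hj : ¬ n ≤ thetaExp a b j := hj
  have := natAbs_le_thetaExp_add_one h j
  exact ⟨by omega, by omega⟩

theorem summable_theta {a b : ℕ} (h : a + b ≠ 0) :
    Summable fun j => (X : ℤ⟦X⟧) ^ thetaExp a b j :=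
  summable_X_pow (tendsto_thetaExp h)

theorem hasSum_theta {a b : ℕ} (h : a + b ≠ 0) :
    HasSum (fun j => X ^ thetaExp a b j) (theta a b) :=
  (summable_theta h).hasSum

theorem theta_comm (a b : ℕ) : theta a b = theta b a := by
  rw [theta, theta, ← (Equiv.neg ℤ).tsum_eq]
  refine tsum_congr fun j => congrArg _ ?_
  have h := two_mul_thetaExp a b (-j)
  have h' := two_mul_thetaExp b a j
  rw [Equiv.neg_apply]
  zify
  linarith

theorem dilate_theta {a b : ℕ} (h : a + b ≠ 0) (k : ℕ) [NeZero k] :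
    dilate k (theta a b) = theta (k * a) (k * b) := by
  rw [theta, (summable_theta h).map_tsum _ (continuous_dilate k)]
  refine tsum_congr fun j => ?_
  rw [map_pow, dilate_X, ← pow_mul, thetaExp, thetaExp]
  ring

theorem hasProd_oneAddProd (a : ℕ) {c : ℕ} (hc : c ≠ 0) :
    HasProd (fun n => 1 + X ^ (a + c * n)) (oneAddProd a c) := by
  refine (multipliable_one_add_X_pow (tendsto_atTop_mono (fun n => ?_) tendsto_id)).hasProd
  exact (Nat.le_mul_of_pos_left n hc.pos).trans (Nat.le_add_left _ a)

theorem dilate_oneAddProd (a : ℕ) {c : ℕ} (hc : c ≠ 0) (k : ℕ) [NeZero k] :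
    dilate k (oneAddProd a c) = oneAddProd (k * a) (k * c) := by
  rw [oneAddProd, (hasProd_oneAddProd a hc).multipliable.map_tprod _ (continuous_dilate k)]
  refine tprod_congr fun n => ?_
  rw [map_add, map_one, map_pow, dilate_X, ← pow_mul, mul_add, mul_assoc]

theorem qPochhammer_X_pow (k n : ℕ) [NeZero k] :
    qPochhammer (X ^ k : ℤ⟦X⟧) n = dilate k (∏ i ∈ range n, (1 - X ^ (i + 1))) := by
  simp [qPochhammer, map_prod]

theorem isUnit_qPochhammer_X_pow {R : Type*} [CommRing R] {k : ℕ} (hk : k ≠ 0) (n : ℕ) :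
    IsUnit (qPochhammer (X ^ k : R⟦X⟧) n) := by
  rw [isUnit_iff_constantCoeff, qPochhammer, map_prod, prod_eq_one fun i _ => by simp [hk]]
  exact isUnit_one

theorem finite_jacobi_triple_product (a b n : ℕ) :
    (∏ i ∈ range n, (1 + X ^ (a + (a + b) * i))) * ∏ i ∈ range n, (1 + X ^ (b + (a + b) * i)) =
      ∑ j ∈ Icc (-n : ℤ) n,
        gaussBinom (X ^ (a + b) : ℤ⟦X⟧) (n + n) (j + n).toNat * X ^ thetaExp a b j := by
  have h := prod_mul_prod_eq_sum_gaussBinom (X ^ a : ℤ⟦X⟧) (X ^ b) n n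
  simp only [← pow_mul, ← pow_add] at h
  rw [h]
  refine sum_bij' (fun k _ => (k : ℤ) - n) (fun j _ => (j + n).toNat) ?_ ?_ ?_ ?_ ?_ <;>
    simp [thetaExp] <;> omega

theorem X_pow_dvd_sub_sum_theta (a b n : ℕ) [NeZero (a + b)] :
    (X : ℤ⟦X⟧) ^ n ∣ qPochhammer (X ^ (a + b)) n *
      ((∏ i ∈ range n, (1 + X ^ (a + (a + b) * i))) * ∏ i ∈ range n, (1 + X ^ (b + (a + b) * i)))
        - ∑ j ∈ Icc (-n : ℤ) n, X ^ thetaExp a b j := by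
  rw [finite_jacobi_triple_product, mul_sum, ← sum_sub_distrib]
  refine dvd_sum fun j hj => ?_
  have hj := mem_Icc.1 hj
  obtain ⟨m, hm⟩ : ∃ m, m = n - j.natAbs := ⟨_, rfl⟩
  have hexp := natAbs_le_thetaExp_add_one (NeZero.ne (a + b)) j
  have h := pow_succ_dvd_qPochhammer_mul_gaussBinom_sub_one (k := (j + n).toNat)
    (l := (n - j).toNat) (m := m) (n := n) (by omega) (by omega) (by omega)
    (isUnit_qPochhammer_X_pow (R := ℤ) (NeZero.ne (a + b)) m)
  rw [show (j + n).toNat + (n - j).toNat = n + n by omega, ← pow_mul] at h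
  have hle : 1 * (m + 1) ≤ (a + b) * (m + 1) := Nat.mul_le_mul_right _ NeZero.one_le
  rw [← mul_assoc, ← sub_one_mul]
  refine (pow_dvd_pow X (show n ≤ (a + b) * (m + 1) + thetaExp a b j by omega)).trans ?_
  rw [pow_add]
  exact mul_dvd_mul_right h _

theorem jacobi_triple_product {a b c : ℕ} [NeZero c] (h : a + b = c) :
    dilate c (pentagonalSeries ℤ) * (oneAddProd a c * oneAddProd b c) = theta a b := by
  subst h
  have hab := NeZero.ne (a + b)
  have hE := ((continuous_dilate (a + b)).tendsto _).comp
    (WithPiTopology.hasProd_one_sub_X_pow ℤ).tendsto_prod_nat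
  have hprod := hE.mul ((hasProd_oneAddProd a hab).tendsto_prod_nat.mul
    (hasProd_oneAddProd b hab).tendsto_prod_nat)
  refine eq_of_tendsto_of_X_pow_dvd_sub hprod ((hasSum_theta hab).comp
    (tendsto_Icc_neg_atTop_atTop.comp tendsto_natCast_atTop_atTop)) fun n => ?_
  simpa only [Function.comp_apply, ← qPochhammer_X_pow] using X_pow_dvd_sub_sum_theta a b n

local notation "E" => pentagonalSeries ℤ
local notation "φ" => theta 1 1
local notation "ψ" => theta 1 3

theorem oneAddProd_one_one_eq_prod (k : ℕ) [NeZero k] :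
    oneAddProd 1 1 = ∏ i : Fin k, oneAddProd (i + 1) k := by
  have hexp (i n : ℕ) : 1 + 1 * (i + k * n) = i + 1 + k * n := by ring
  rw [oneAddProd, tprod_nat_eq_prod_fin_tprod k]
  · simp only [hexp, oneAddProd]
  · exact (hasProd_oneAddProd 1 one_ne_zero).multipliable
  · simp only [hexp]
    exact fun i => (hasProd_oneAddProd _ (NeZero.ne k)).multipliable

theorem oneAddProd_zero_left {c : ℕ} (hc : c ≠ 0) : oneAddProd 0 c = 2 * oneAddProd c c := by
  have hexp (n : ℕ) : 0 + c * (n + 1) = c + c * n := by ring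
  rw [oneAddProd, tprod_eq_zero_mul', mul_zero, add_zero, pow_zero, one_add_one_eq_two]
  · simp only [hexp, oneAddProd]
  · simp only [hexp]
    exact (hasProd_oneAddProd c hc).multipliable

theorem pentagonalSeries_mul_oneAddProd : E * oneAddProd 1 1 = dilate 2 E := by
  have hE := WithPiTopology.hasProd_one_sub_X_pow ℤ
  have hE₂ := hE.map (dilate 2) (continuous_dilate 2)
  refine (hE.mul (hasProd_oneAddProd 1 one_ne_zero)).unique (hE₂.congr_fun fun n => ?_)
  simp only [Function.comp_apply, map_sub, map_one, map_pow, dilate_X]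
  ring

/-- The generating function `∑ b5' n X ^ n`. -/
noncomputable def genFun : ℤ⟦X⟧ := .mk fun n => (b5' n : ℤ)

theorem genFun_eq_prod :
    genFun = oneAddProd 1 5 * oneAddProd 2 5 * oneAddProd 3 5 * oneAddProd 4 5 := by
  set g : ℕ → ℤ⟦X⟧ := fun i => if ¬ 5 ∣ i + 1 then 1 + X ^ (i + 1) else 1
  have hg : HasProd g genFun := hasProd_distincts_filter (R := ℤ) (¬ 5 ∣ ·)
  have hres (i : Fin 5) : HasProd (fun n => g (i + 5 * n))
      (if ¬ 5 ∣ (i + 1 : ℕ) then oneAddProd (i + 1) 5 else 1) := by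
    have hdvd (n : ℕ) : 5 ∣ i + 5 * n + 1 ↔ 5 ∣ (i + 1 : ℕ) := by omega
    simp only [g, hdvd]
    split_ifs
    · exact hasProd_one
    · simpa only [add_right_comm] using hasProd_oneAddProd (i + 1) (c := 5) (by norm_num)
  rw [← hg.tprod_eq, tprod_nat_eq_prod_fin_tprod 5 hg.multipliable fun i => (hres i).multipliable]
  simp [(hres _).tprod_eq, Fin.prod_univ_five]

theorem tendsto_add_prod_cofinite {α β : Type*} {e : α → ℕ} {e' : β → ℕ}
    (he : Tendsto e cofinite atTop) (he' : Tendsto e' cofinite atTop) :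
    Tendsto (fun p : α × β => e p.1 + e' p.2) cofinite atTop := by
  rw [← coprod_cofinite, Filter.coprod, tendsto_sup]
  exact ⟨tendsto_atTop_mono (fun p => Nat.le_add_right _ _) (he.comp tendsto_comap),
    tendsto_atTop_mono (fun p => Nat.le_add_left _ _) (he'.comp tendsto_comap)⟩

theorem summable_theta_mul_theta {a b c d : ℕ} (hab : a + b ≠ 0) (hcd : c + d ≠ 0) :
    Summable fun p : ℤ × ℤ => (X : ℤ⟦X⟧) ^ (thetaExp a b p.1 + thetaExp c d p.2) :=
  summable_X_pow (tendsto_add_prod_cofinite (tendsto_thetaExp hab) (tendsto_thetaExp hcd))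

theorem theta_mul_theta {a b c d : ℕ} (hab : a + b ≠ 0) (hcd : c + d ≠ 0) :
    theta a b * theta c d = ∑' p : ℤ × ℤ, X ^ (thetaExp a b p.1 + thetaExp c d p.2) := by
  have h := summable_theta_mul_theta hab hcd
  simp only [pow_add] at h ⊢
  exact (summable_theta hab).tsum_mul_tsum (summable_theta hcd) h

theorem theta_mul_theta_eq_sum {ι : Type*} [Fintype ι] {a b c d : ℕ} (hab : a + b ≠ 0)
    (hcd : c + d ≠ 0) {m : ι → ℤ × ℤ → ℤ × ℤ} (hm : Function.Bijective m.uncurry)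
    {r a' b' c' d' : ι → ℕ} (hab' : ∀ i, a' i + b' i ≠ 0) (hcd' : ∀ i, c' i + d' i ≠ 0)
    (hexp : ∀ i p, thetaExp a b (m i p).1 + thetaExp c d (m i p).2 =
      r i + (thetaExp (a' i) (b' i) p.1 + thetaExp (c' i) (d' i) p.2)) :
    theta a b * theta c d = ∑ i, X ^ r i * (theta (a' i) (b' i) * theta (c' i) (d' i)) := by
  have hsum (i : ι) := (summable_theta_mul_theta (hab' i) (hcd' i)).mul_left (X ^ r i)
  rw [theta_mul_theta hab hcd,
    tsum_eq_sum_tsum_of_bijective hm (summable_theta_mul_theta hab hcd)]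
  · refine sum_congr rfl fun i _ => ?_
    rw [theta_mul_theta (hab' i) (hcd' i),
      ← (summable_theta_mul_theta (hab' i) (hcd' i)).tsum_mul_left]
    simp only [hexp, pow_add]
  · intro i
    simpa only [hexp, pow_add] using hsum i

/-- The splitting of `ℤ` into even and odd integers. -/
def parityMap : Fin 2 → ℤ → ℤ
  | 0, i => 2 * i
  | 1, i => 2 * i - 1

/-- The splitting of `ℤ × ℤ` into the pairs `(i, j)` with `i + j` even and odd. -/
def diagonalMap : Fin 2 → ℤ × ℤ → ℤ × ℤ
  | 0, (x, y) => (x + y, x - y)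
  | 1, (x, y) => (x + y, y - x - 1)

/-- The splitting of `ℤ × ℤ` into the five residue classes of `i - 2 * j` modulo `5`. The
rotation `(i, j) ↦ (-1 - j, i)`, which preserves `triangular i + triangular j`, permutes the
first four branches cyclically and fixes the class of the last one. -/
def modFiveMap : Fin 5 → ℤ × ℤ → ℤ × ℤ
  | 0, (x, y) => (2 * x - y - 1, x + 2 * y - 1)
  | 1, (x, y) => (-x - 2 * y, 2 * x - y - 1)
  | 2, (x, y) => (y - 2 * x, -x - 2 * y)
  | 3, (x, y) => (x + 2 * y - 1, y - 2 * x)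
  | 4, (x, y) => (2 * x - y, x + 2 * y + 1)

theorem bijective_parityMap : Function.Bijective parityMap.uncurry := by
  constructor
  · rintro ⟨k, i⟩ ⟨l, j⟩ h
    fin_cases k <;> fin_cases l <;> grind [parityMap, Function.uncurry]
  · intro j
    rcases j.even_or_odd' with ⟨i, rfl | rfl⟩
    · exact ⟨(0, i), rfl⟩
    · exact ⟨(1, i + 1), by grind [parityMap, Function.uncurry]⟩

theorem bijective_diagonalMap : Function.Bijective diagonalMap.uncurry := by
  constructor
  · rintro ⟨k, x, y⟩ ⟨l, x', y'⟩ h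
    fin_cases k <;> fin_cases l <;> grind [diagonalMap, Function.uncurry]
  · rintro ⟨i, j⟩
    rcases (i + j).even_or_odd' with ⟨t, ht | ht⟩
    · exact ⟨(0, t, i - t), by grind [diagonalMap, Function.uncurry]⟩
    · exact ⟨(1, i - t - 1, t + 1), by grind [diagonalMap, Function.uncurry]⟩

theorem bijective_modFiveMap : Function.Bijective modFiveMap.uncurry := by
  constructor
  · rintro ⟨k, x, y⟩ ⟨l, x', y'⟩ h
    fin_cases k <;> fin_cases l <;> grind [modFiveMap, Function.uncurry]
  · rintro ⟨i, j⟩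
    obtain ⟨t, ht⟩ : ∃ t, i = 2 * j + 5 * t ∨ i = 2 * j + 5 * t + 1 ∨ i = 2 * j + 5 * t + 2 ∨
      i = 2 * j + 5 * t + 3 ∨ i = 2 * j + 5 * t + 4 := ⟨(i - 2 * j) / 5, by omega⟩
    rcases ht with rfl | rfl | rfl | rfl | rfl
    · exact ⟨(2, -j - 2 * t, t), by grind [modFiveMap, Function.uncurry]⟩
    · exact ⟨(0, j + 2 * t + 1, -t), by grind [modFiveMap, Function.uncurry]⟩
    · exact ⟨(1, -t, -j - 2 * t - 1), by grind [modFiveMap, Function.uncurry]⟩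
    · exact ⟨(4, j + 2 * t + 1, -t - 1), by grind [modFiveMap, Function.uncurry]⟩
    · exact ⟨(3, t + 1, j + 2 * t + 2), by grind [modFiveMap, Function.uncurry]⟩

theorem theta_eq_even_add_odd {b d : ℕ} (h : b + d + b ≠ 0) :
    theta (b + d) b = theta (4 * b + 3 * d) (4 * b + d) + X ^ b * theta d (8 * b + 3 * d) := by
  have heven (i : ℤ) : thetaExp (b + d) b (2 * i) = thetaExp (4 * b + 3 * d) (4 * b + d) i := by
    have := two_mul_thetaExp (b + d) b (2 * i)
    have := two_mul_thetaExp (4 * b + 3 * d) (4 * b + d) i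
    zify at *
    linarith
  have hodd (i : ℤ) : thetaExp (b + d) b (2 * i - 1) = b + thetaExp d (8 * b + 3 * d) i := by
    have := two_mul_thetaExp (b + d) b (2 * i - 1)
    have := two_mul_thetaExp d (8 * b + 3 * d) i
    zify at *
    linarith
  have hs := summable_theta (a := b + d) (b := b) h
  have hs' := summable_theta (a := d) (b := 8 * b + 3 * d) (by omega)
  rw [theta, tsum_eq_sum_tsum_of_bijective bijective_parityMap hs fun k =>
    hs.comp_injective (bijective_parityMap.injective.comp (Prod.mk_right_injective k)),
    Fin.sum_univ_two]
  simp only [parityMap, heven, hodd, pow_add, theta, hs'.tsum_mul_left]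

theorem thetaExp_add_thetaExp_diagonalMap (k : Fin 2) (p : ℤ × ℤ) :
    thetaExp 1 0 (diagonalMap k p).1 + thetaExp 1 0 (diagonalMap k p).2 =
      thetaExp 2 0 p.1 + thetaExp 1 1 p.2 := by
  have := two_mul_thetaExp 1 0 (diagonalMap k p).1
  have := two_mul_thetaExp 1 0 (diagonalMap k p).2
  have := two_mul_thetaExp 2 0 p.1
  have := two_mul_thetaExp 1 1 p.2
  zify
  fin_cases k <;> dsimp [diagonalMap] at * <;> linarith

theorem thetaExp_add_thetaExp_modFiveMap (k : Fin 5) (p : ℤ × ℤ) :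
    thetaExp 1 0 (modFiveMap k p).1 + thetaExp 1 0 (modFiveMap k p).2 = ![0, 0, 0, 0, 1] k +
      (thetaExp (![1, 1, 1, 1, 5] k) (![4, 4, 4, 4, 0] k) p.1 +
        thetaExp (![2, 2, 2, 2, 5] k) (![3, 3, 3, 3, 0] k) p.2) := by
  have := two_mul_thetaExp 1 0 (modFiveMap k p).1
  have := two_mul_thetaExp 1 0 (modFiveMap k p).2
  have := two_mul_thetaExp (![1, 1, 1, 1, 5] k) (![4, 4, 4, 4, 0] k) p.1
  have := two_mul_thetaExp (![2, 2, 2, 2, 5] k) (![3, 3, 3, 3, 0] k) p.2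
  zify
  fin_cases k <;> dsimp [modFiveMap] at * <;> linarith

theorem theta_one_zero_sq : theta 1 0 ^ 2 = 2 * (φ * theta 2 0) := by
  have h := theta_mul_theta_eq_sum one_ne_zero one_ne_zero bijective_diagonalMap
    (r := fun _ => 0) (fun _ => two_ne_zero) (fun _ => two_ne_zero) fun k p =>
      (thetaExp_add_thetaExp_diagonalMap k p).trans (zero_add _).symm
  rw [sq, h, Fin.sum_univ_two]
  ring

theorem theta_one_zero_sq_eq_add :
    theta 1 0 ^ 2 = 4 * (theta 1 4 * theta 2 3) + X * theta 5 0 ^ 2 := by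
  rw [sq, theta_mul_theta_eq_sum one_ne_zero one_ne_zero bijective_modFiveMap (by decide)
    (by decide) thetaExp_add_thetaExp_modFiveMap, Fin.sum_univ_five]
  dsimp
  ring

instance charZero_powerSeries {R : Type*} [Semiring R] [CharZero R] : CharZero R⟦X⟧ :=
  ⟨fun m n h => by simpa using congrArg constantCoeff h⟩

theorem theta_one_zero : theta 1 0 = 2 * ψ := by
  have h : theta 1 0 = theta 3 1 + X ^ 0 * ψ :=
    theta_eq_even_add_odd (b := 0) (d := 1) one_ne_zero
  rw [h, theta_comm 3 1]
  ring

theorem theta_self_zero (k : ℕ) [NeZero k] : theta k 0 = 2 * dilate k ψ := by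
  have h := dilate_theta (a := 1) (b := 0) one_ne_zero k
  rw [mul_one, mul_zero, theta_one_zero, map_mul, map_ofNat] at h
  exact h.symm

theorem phi_eq : φ = dilate 4 φ + 2 * X * dilate 8 ψ := by
  have h : φ = theta 4 4 + X ^ 1 * theta 0 8 :=
    theta_eq_even_add_odd (b := 1) (d := 0) two_ne_zero
  rw [theta_comm 0 8, theta_self_zero 8] at h
  rw [dilate_theta two_ne_zero, h]
  ring

theorem pentagonalSeries_mul_psi : E * ψ = dilate 2 E ^ 2 := by
  have h := jacobi_triple_product (show 1 + 0 = 1 from rfl)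
  rw [theta_one_zero, oneAddProd_zero_left one_ne_zero] at h
  have hE : dilate 1 E = E := expand_one_apply ..
  rw [hE] at h
  refine mul_left_cancel₀ (two_ne_zero (α := ℤ⟦X⟧)) ?_
  rw [← pentagonalSeries_mul_oneAddProd]
  linear_combination -E * h

theorem psi_sq_eq_phi_mul : ψ ^ 2 = φ * dilate 2 ψ := by
  have h := theta_one_zero_sq
  rw [theta_one_zero, theta_self_zero] at h
  refine mul_left_cancel₀ (OfNat.ofNat_ne_zero (R := ℤ⟦X⟧) 4) ?_
  linear_combination h

theorem psi_sq_eq_add : ψ ^ 2 = theta 1 4 * theta 2 3 + X * dilate 5 ψ ^ 2 := by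
  have h := theta_one_zero_sq_eq_add
  rw [theta_one_zero, theta_self_zero] at h
  refine mul_left_cancel₀ (OfNat.ofNat_ne_zero (R := ℤ⟦X⟧) 4) ?_
  linear_combination h

theorem dilate_pentagonalSeries_sq_mul_genFun :
    dilate 5 E ^ 2 * genFun = ψ ^ 2 - X * dilate 5 ψ ^ 2 := by
  have h₁ := jacobi_triple_product (show 1 + 4 = 5 from rfl)
  have h₂ := jacobi_triple_product (show 2 + 3 = 5 from rfl)
  rw [psi_sq_eq_add, add_sub_cancel_right, ← h₁, ← h₂, genFun_eq_prod]
  ring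

theorem pentagonalSeries_mul_dilate_mul_genFun :
    E * dilate 10 E * genFun = dilate 2 E * dilate 5 E := by
  have h₁ := pentagonalSeries_mul_oneAddProd
  have h₅ : dilate 5 E * oneAddProd 5 5 = dilate 10 E := by
    simpa [dilate_oneAddProd, dilate_dilate] using congrArg (dilate 5) h₁
  have hP : oneAddProd 1 1 = oneAddProd 1 5 * oneAddProd 2 5 * oneAddProd 3 5 *
      oneAddProd 4 5 * oneAddProd 5 5 := by
    simpa [Fin.prod_univ_five] using oneAddProd_one_one_eq_prod 5
  rw [← h₅, ← h₁, hP, genFun_eq_prod]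
  ring

theorem isUnit_pentagonalSeries : IsUnit E := by
  rw [isUnit_iff_constantCoeff, ← coeff_zero_eq_constantCoeff_apply]
  exact (coeff_pentagonalSeries_pentagonal ℤ 0).symm ▸ isUnit_one

theorem two_dvd_dilate (k : ℕ) [NeZero k] {F : ℤ⟦X⟧} (h : 2 ∣ F) : 2 ∣ dilate k F := by
  simpa only [map_ofNat] using map_dvd (dilate k) h

theorem two_dvd_sq_sub_dilate (F : ℤ⟦X⟧) : 2 ∣ F ^ 2 - dilate 2 F :=
  prime_dvd_pow_sub_dilate 2 F

theorem two_dvd_dilate_sq_sub_dilate (k l : ℕ) [NeZero k] [NeZero l] (h : k * 2 = l)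
    (F : ℤ⟦X⟧) : 2 ∣ dilate k F ^ 2 - dilate l F := by
  subst h
  simpa [dilate_dilate] using two_dvd_dilate k (two_dvd_sq_sub_dilate F)

theorem two_dvd_dilate_mul_genFun_sub : 2 ∣ dilate 5 E * genFun - E := by
  have unit : IsUnit (E * dilate 5 E) :=
    isUnit_pentagonalSeries.mul (isUnit_dilate 5 isUnit_pentagonalSeries)
  rw [← unit.dvd_mul_left]
  obtain ⟨u, hu⟩ := two_dvd_dilate_sq_sub_dilate 5 10 rfl E
  obtain ⟨v, hv⟩ := two_dvd_sq_sub_dilate E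
  refine ⟨E * genFun * u - dilate 5 E * v, ?_⟩
  linear_combination pentagonalSeries_mul_dilate_mul_genFun + E * genFun * hu - dilate 5 E * hv

theorem two_dvd_pentagonalSeries_mul_dilate_sub :
    2 ∣ E * dilate 5 E - (dilate 2 ψ + X * dilate 10 ψ) := by
  obtain ⟨w, hw⟩ := two_dvd_dilate_mul_genFun_sub
  obtain ⟨a, ha⟩ := two_dvd_sq_sub_dilate ψ
  obtain ⟨b, hb⟩ := two_dvd_dilate_sq_sub_dilate 5 10 rfl ψ
  refine ⟨a + X * b - X * dilate 5 ψ ^ 2 - w * dilate 5 E, ?_⟩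
  linear_combination dilate_pentagonalSeries_sq_mul_genFun - dilate 5 E * hw + ha + X * hb

theorem two_dvd_psi_sub : 2 ∣ ψ - E ^ 3 := by
  rw [← isUnit_pentagonalSeries.dvd_mul_left]
  obtain ⟨u, hu⟩ := two_dvd_sq_sub_dilate E
  refine ⟨-u * (E ^ 2 + dilate 2 E), ?_⟩
  linear_combination pentagonalSeries_mul_psi - (E ^ 2 + dilate 2 E) * hu

theorem four_dvd_sq_mul_phi_sub : 4 ∣ E ^ 2 * φ - dilate 2 E := by
  have unit : IsUnit (dilate 4 E ^ 2) := (isUnit_dilate 4 isUnit_pentagonalSeries).pow 2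
  have hψ₂ : dilate 2 E * dilate 2 ψ = dilate 4 E ^ 2 := by
    simpa [dilate_dilate] using congrArg (dilate 2) pentagonalSeries_mul_psi
  have eta : dilate 4 E ^ 2 * (E ^ 2 * φ) = dilate 2 E ^ 5 := by
    linear_combination -E ^ 2 * φ * hψ₂ - E ^ 2 * dilate 2 E * psi_sq_eq_phi_mul
      + dilate 2 E * (E * ψ + dilate 2 E ^ 2) * pentagonalSeries_mul_psi
  rw [← unit.dvd_mul_left]
  obtain ⟨u, hu⟩ := two_dvd_dilate_sq_sub_dilate 2 4 rfl E
  refine ⟨dilate 2 E * u * (dilate 4 E + u), ?_⟩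
  linear_combination eta + dilate 2 E * (dilate 2 E ^ 2 + dilate 4 E + 2 * u) * hu

theorem two_dvd_phi_sub_one : 2 ∣ φ - 1 := by
  rw [← (isUnit_pentagonalSeries.pow 2).dvd_mul_left]
  obtain ⟨u, hu⟩ := two_dvd_sq_sub_dilate E
  obtain ⟨v, hv⟩ := four_dvd_sq_mul_phi_sub
  exact ⟨2 * v - u, by linear_combination hv - hu⟩

theorem four_dvd_phi_mul_dilate_phi_sub :
    4 ∣ φ * dilate 5 φ - (dilate 4 φ * dilate 20 φ + 2 * X * (dilate 4 E * dilate 20 E)) := by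
  have hφ₅ : dilate 5 φ = dilate 20 φ + 2 * X ^ 5 * dilate 40 ψ := by
    simpa [dilate_dilate, map_ofNat, ← pow_mul] using congrArg (dilate 5) phi_eq
  obtain ⟨u, hu⟩ : 2 ∣ dilate 4 φ - 1 := by simpa using two_dvd_dilate 4 two_dvd_phi_sub_one
  obtain ⟨v, hv⟩ : 2 ∣ dilate 20 φ - 1 := by simpa using two_dvd_dilate 20 two_dvd_phi_sub_one
  obtain ⟨w, hw⟩ : 2 ∣ dilate 4 E * dilate 20 E - (dilate 8 ψ + X ^ 4 * dilate 40 ψ) := by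
    simpa [dilate_dilate] using two_dvd_dilate 4 two_dvd_pentagonalSeries_mul_dilate_sub
  refine ⟨X ^ 6 * dilate 8 ψ * dilate 40 ψ + X * dilate 8 ψ * v + X ^ 5 * dilate 40 ψ * u
    - X * w, ?_⟩
  linear_combination (dilate 4 φ + 2 * X * dilate 8 ψ) * hφ₅ + dilate 5 φ * phi_eq
    + 2 * X * dilate 8 ψ * hv + 2 * X ^ 5 * dilate 40 ψ * hu - 2 * X * hw

theorem two_dvd_dilate_mul_dilate_mul_psi_sub :
    2 ∣ dilate 2 E * dilate 10 E * ψ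
      - dilate 5 E * dilate 4 E * (dilate 2 ψ + X * dilate 10 ψ) := by
  obtain ⟨a, ha⟩ := two_dvd_pentagonalSeries_mul_dilate_sub
  obtain ⟨b, hb⟩ := two_dvd_psi_sub
  obtain ⟨u, hu⟩ := two_dvd_sq_sub_dilate E
  obtain ⟨v, hv⟩ := two_dvd_dilate_sq_sub_dilate 5 10 rfl E
  obtain ⟨w, hw⟩ := two_dvd_dilate_sq_sub_dilate 2 4 rfl E
  refine ⟨E * dilate 5 E ^ 2 * (dilate 2 E * u + w) - dilate 2 E * E ^ 3 * v
    + dilate 2 E * dilate 10 E * b + dilate 5 E * dilate 4 E * a, ?_⟩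
  linear_combination dilate 2 E * dilate 10 E * hb + dilate 5 E * dilate 4 E * ha
    - dilate 2 E * E ^ 3 * hv + E * dilate 5 E ^ 2 * (hw + dilate 2 E * hu)

theorem four_dvd_dilate_mul_genFun_sub :
    4 ∣ dilate 10 E * genFun - (dilate 4 φ * dilate 20 φ * dilate 2 ψ
      - X * (dilate 5 φ * dilate 5 ψ ^ 2)
      + 2 * X * (dilate 10 E * dilate 8 E * (dilate 4 ψ + X ^ 2 * dilate 20 ψ))) := by
  obtain ⟨w, hw⟩ : 4 ∣ dilate 5 E ^ 2 * dilate 5 φ - dilate 10 E := by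
    simpa [dilate_dilate, map_ofNat] using map_dvd (dilate 5) four_dvd_sq_mul_phi_sub
  obtain ⟨a, ha⟩ := four_dvd_phi_mul_dilate_phi_sub
  obtain ⟨b, hb⟩ : 2 ∣ dilate 4 E * dilate 20 E * dilate 2 ψ
      - dilate 10 E * dilate 8 E * (dilate 4 ψ + X ^ 2 * dilate 20 ψ) := by
    simpa [dilate_dilate] using two_dvd_dilate 2 two_dvd_dilate_mul_dilate_mul_psi_sub
  refine ⟨a * dilate 2 ψ + X * b - w * genFun, ?_⟩
  linear_combination dilate 2 ψ * ha + 2 * X * hb - genFun * hw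
    + dilate 5 φ * (dilate_pentagonalSeries_sq_mul_genFun + psi_sq_eq_phi_mul)

theorem exists_four_dvd_genFun_sub : ∃ A B C : ℤ⟦X⟧, 4 ∣ genFun - (dilate 2 A +
    X * (dilate 5 B + 2 * (dilate 4 C + X ^ 2 * dilate 4 (dilate 2 E * dilate 5 ψ)))) := by
  obtain ⟨u, hu⟩ := isUnit_pentagonalSeries.exists_right_inv
  have hu' : dilate 10 E * dilate 10 u = 1 := by rw [← map_mul, hu, map_one]
  obtain ⟨w, hw⟩ := four_dvd_dilate_mul_genFun_sub
  refine ⟨dilate 5 u * (dilate 2 φ * dilate 10 φ * ψ), -(dilate 2 u * (φ * ψ ^ 2)),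
    dilate 2 E * ψ, dilate 10 u * w, ?_⟩
  simp only [map_mul, map_neg, map_pow, dilate_dilate, Nat.reduceMul]
  linear_combination dilate 10 u * hw +
    (2 * X * dilate 8 E * (dilate 4 ψ + X ^ 2 * dilate 20 ψ) - genFun) * hu'

theorem coeff_pentagonalSeries_eq_zero_of_mod_five {n : ℕ} (h : n % 5 = 3) :
    coeff n E = 0 := by
  refine coeff_pentagonalSeries_eq_zero ℤ ?_
  rintro ⟨k, rfl⟩
  have no_solution : ∀ k : ZMod 5, 2 * 3 ≠ k * (3 * k - 1) := by decide
  have hk := congrArg (Int.cast : ℤ → ZMod 5) (two_mul_natCast_pentagonal k)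
  push_cast [(ZMod.natCast_eq_natCast_iff' _ 3 5).2 h] at hk
  exact no_solution k hk

theorem coeff_dilate_mul_dilate_eq_zero (n : ℕ) (F : ℤ⟦X⟧) :
    coeff (5 * n + 1) (dilate 2 E * dilate 5 F) = 0 := by
  rw [coeff_mul]
  refine sum_eq_zero fun p hp => ?_
  have hp := mem_antidiagonal.1 hp
  by_cases h₅ : 5 ∣ p.2
  · by_cases h₂ : 2 ∣ p.1
    · obtain ⟨m, hm⟩ := h₂
      rw [hm, coeff_mul_dilate, coeff_pentagonalSeries_eq_zero_of_mod_five (by omega), zero_mul]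
    · rw [coeff_dilate_of_not_dvd 2 h₂, zero_mul]
  · rw [coeff_dilate_of_not_dvd 5 h₅, mul_zero]

theorem four_dvd_coeff_genFun (n : ℕ) : 4 ∣ coeff (20 * n + 7) genFun := by
  obtain ⟨A, B, C, h⟩ := exists_four_dvd_genFun_sub
  have hA : coeff (20 * n + 6 + 1) (dilate 2 A) = 0 := coeff_dilate_of_not_dvd 2 (by omega) A
  have hB : coeff (20 * n + 6) (dilate 5 B) = 0 := coeff_dilate_of_not_dvd 5 (by omega) B
  have hC : coeff (20 * n + 6) (dilate 4 C) = 0 := coeff_dilate_of_not_dvd 4 (by omega) C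
  have hψ : coeff (20 * n + 6) (X ^ 2 * dilate 4 (dilate 2 E * dilate 5 ψ)) = 0 := by
    rw [show 20 * n + 6 = 4 * (5 * n + 1) + 2 by ring, coeff_X_pow_mul, coeff_mul_dilate,
      coeff_dilate_mul_dilate_eq_zero]
  have hcoeff := (natCast_dvd_iff_forall_dvd_coeff 4 _).1 h (20 * n + 6 + 1)
  simpa only [map_sub, map_add, coeff_succ_X_mul, two_mul, hA, hB, hC, hψ, add_zero, sub_zero,
    Nat.cast_ofNat] using hcoeff

end QSeries

theorem b5'_20n7_mod4 (n : ℕ) : b5' (20 * n + 7) ≡ 0 [MOD 4] := by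
  have h := QSeries.four_dvd_coeff_genFun n
  rw [QSeries.genFun, coeff_mk] at h
  exact Nat.modEq_zero_iff_dvd.2 (Int.natCast_dvd_natCast.1 h)
end
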